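/- Consider the multiple-index model Y = f(B*ᵀ X) + ε, where X ∈ ℝ^d has an everywhere positive, twice continuously differentiable density p, B* ∈ ℝ^{d×k} has orthonormal columns, f : ℝ^k → ℝ is twice continuously differentiable, and ε is a mean-zero random variable independent of X. Assume the second-order Stein identity applies to the function x ↦ f(B*ᵀ x) (integrability of f(B*ᵀx)·T_p(x) and of the Hessian of x ↦ f(B*ᵀx), and vanishing of the boundary terms in the double integration by parts), and that Y·T_p(X) is entrywise integrable. Then E[Y · T_p(X)] = B* D₀ B*ᵀ, where D₀ = E[∇²f(B*ᵀ X)] ∈ ℝ^{k×k} is the expected Hessian of f evaluated at B*ᵀX. -/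

import Mathlib

/-!
The noise drops out because it is centred and independent of `X`, so the claim is the double
integration by parts `∫ g ∂ᵢ∂ⱼp = ∫ p ∂ᵢ∂ⱼg` for `g(x) = f(Bᵀx)`, followed by the chain rule.

The products `∂ᵢg ∂ⱼp` of first derivatives are not known to be integrable, so integrating by parts
one coordinate at a time fails for `i ≠ j`. Instead put `V = g ∇p - p ∇g`. Then
`g ∂ᵢ∂ⱼp - p ∂ᵢ∂ⱼg = (∂ᵢVⱼ + ∂ⱼVᵢ)/2` is integrable for all `i, j`, and `Vᵢ` tends to `0` at both
ends of almost every line in direction `i`. For `i = j` the integral vanishes by the fundamental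
theorem of calculus on lines. The same argument bounds `|Vⱼ|` on each line in direction `j` by the
integral of `|∂ⱼVⱼ|` over that line (`ae_enorm_le`). For `i ≠ j`, test against a cutoff `χ` at
scale `R`: the error `∫ Vⱼ ∂ᵢχ` lives on `|xⱼ| ≤ 2R`, `|xᵢ| ≥ R`, where `∂ᵢχ = O(1/R)`, so it is at
most a constant times the tail `∫_{|xᵢ| ≥ R} |∂ⱼVⱼ|`, which tends to `0`
(`lintegral_slab_le`, `tendsto_integral_cutoff`, `integral_symm_grad_eq_zero`).
-/

open MeasureTheory ProbabilityTheory Filter Matrix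

/-- The second-order score function `T_p(x) = ∇²p(x)/p(x)` of a density `p` on `ℝ^d`,
entrywise. -/
noncomputable def score2 {d : ℕ} (p : (Fin d → ℝ) → ℝ) (x : Fin d → ℝ) (j k : Fin d) : ℝ :=
  fderiv ℝ (fun y => fderiv ℝ p y (Pi.single k 1)) x (Pi.single j 1) / p x

/-- The `(a,b)` entry of the Hessian `∇²f` of `f : ℝ^k → ℝ`. -/
noncomputable def hess {k : ℕ} (f : (Fin k → ℝ) → ℝ) (z : Fin k → ℝ) (a b : Fin k) : ℝ :=
  fderiv ℝ (fun w => fderiv ℝ f w (Pi.single b 1)) z (Pi.single a 1)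

/-! ### Partial derivatives -/

/-- The partial derivative of `u` in the `i`-th coordinate direction. -/
noncomputable def pd {d : ℕ} (i : Fin d) (u : (Fin d → ℝ) → ℝ) (x : Fin d → ℝ) : ℝ :=
  fderiv ℝ u x (Pi.single i 1)

lemma contDiff_pd {d : ℕ} {i : Fin d} {u : (Fin d → ℝ) → ℝ} (hu : ContDiff ℝ 2 u) :
    ContDiff ℝ 1 (pd i u) :=
  (hu.fderiv_right (m := 1) (by norm_num)).clm_apply contDiff_const

lemma continuous_pd {d : ℕ} {i : Fin d} {u : (Fin d → ℝ) → ℝ} (hu : ContDiff ℝ 1 u) :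
    Continuous (pd i u) :=
  (hu.continuous_fderiv one_ne_zero).clm_apply continuous_const

lemma pd_comm {d : ℕ} (i j : Fin d) {u : (Fin d → ℝ) → ℝ} (hu : ContDiff ℝ 2 u)
    (x : Fin d → ℝ) : pd i (pd j u) x = pd j (pd i u) x := by
  have hd : DifferentiableAt ℝ (fderiv ℝ u) x :=
    (hu.fderiv_right (m := 1) (by norm_num)).differentiable one_ne_zero x
  have key : ∀ a b : Fin d, pd a (pd b u) x
      = fderiv ℝ (fderiv ℝ u) x (Pi.single a 1) (Pi.single b 1) := by
    intro a b
    have := hd.hasFDerivAt.clm_apply (hasFDerivAt_const (Pi.single b (1 : ℝ)) x)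
    change fderiv ℝ (fun y => fderiv ℝ u y (Pi.single b 1)) x (Pi.single a 1) = _
    rw [this.fderiv]
    simp
  rw [key, key]
  exact (hu.contDiffAt.isSymmSndFDerivAt (by simp)) _ _

lemma pd_mul {d : ℕ} (i : Fin d) {u v : (Fin d → ℝ) → ℝ} (hu : ContDiff ℝ 1 u)
    (hv : ContDiff ℝ 1 v) (x : Fin d → ℝ) :
    pd i (fun y => u y * v y) x = u x * pd i v x + pd i u x * v x := by
  unfold pd
  rw [fderiv_fun_mul (hu.differentiable one_ne_zero x) (hv.differentiable one_ne_zero x)]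
  simp [mul_comm]

lemma pd_sub {d : ℕ} (i : Fin d) {u v : (Fin d → ℝ) → ℝ} (hu : ContDiff ℝ 1 u)
    (hv : ContDiff ℝ 1 v) (x : Fin d → ℝ) :
    pd i (fun y => u y - v y) x = pd i u x - pd i v x := by
  unfold pd
  rw [fderiv_fun_sub (hu.differentiable one_ne_zero x) (hv.differentiable one_ne_zero x)]
  simp

lemma hasDerivAt_pd_update {d : ℕ} (i : Fin d) {u : (Fin d → ℝ) → ℝ} (hu : ContDiff ℝ 1 u)
    (x : Fin d → ℝ) (t : ℝ) :
    HasDerivAt (fun s => u (Function.update x i s)) (pd i u (Function.update x i t)) t :=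
  (hu.differentiable one_ne_zero (Function.update x i t)).hasFDerivAt.comp_hasDerivAt t
    (hasDerivAt_update x i t)

lemma hasDerivAt_pd_insertNth {n : ℕ} (i : Fin (n + 1)) {u : (Fin (n + 1) → ℝ) → ℝ}
    (hu : ContDiff ℝ 1 u) (y : Fin n → ℝ) (t : ℝ) :
    HasDerivAt (fun s => u (i.insertNth s y)) (pd i u (i.insertNth t y)) t := by
  simpa [Fin.update_insertNth] using hasDerivAt_pd_update i hu (i.insertNth 0 y) t

/-! ### Integration along coordinate lines -/

lemma measurePreserving_insertNth {n : ℕ} (i : Fin (n + 1)) :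
    MeasurePreserving (fun z : ℝ × (Fin n → ℝ) => (i.insertNth z.1 z.2 : Fin (n + 1) → ℝ))
      (volume.prod volume) volume :=
  (volume_preserving_piFinSuccAbove (fun _ => ℝ) i).symm _

lemma measurableEmbedding_insertNth {n : ℕ} (i : Fin (n + 1)) :
    MeasurableEmbedding
      (fun z : ℝ × (Fin n → ℝ) => (i.insertNth z.1 z.2 : Fin (n + 1) → ℝ)) :=
  (MeasurableEquiv.piFinSuccAbove (fun _ => ℝ) i).symm.measurableEmbedding

lemma lintegral_insertNth {n : ℕ} (i : Fin (n + 1)) {F : (Fin (n + 1) → ℝ) → ENNReal}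
    (hF : Measurable F) :
    ∫⁻ x, F x = ∫⁻ y : Fin n → ℝ, ∫⁻ t : ℝ, F (i.insertNth t y) := by
  rw [← (measurePreserving_insertNth i).lintegral_comp_emb (measurableEmbedding_insertNth i),
    lintegral_prod_symm]
  exact (hF.comp (measurableEmbedding_insertNth i).measurable).aemeasurable

/-- Passage from almost every point of `ℝⁿ⁺¹` to almost every line in direction `i`, the lines
being parametrized by the remaining `n` coordinates. -/
lemma ae_line {n : ℕ} (i : Fin (n + 1)) {V : (Fin (n + 1) → ℝ) → ℝ}
    (hint : Integrable (pd i V))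
    (hlim : ∀ᵐ x : Fin (n + 1) → ℝ, Tendsto (fun t => V (Function.update x i t)) atTop (nhds 0) ∧
      Tendsto (fun t => V (Function.update x i t)) atBot (nhds 0)) :
    ∀ᵐ y : Fin n → ℝ, Integrable (fun t => pd i V (i.insertNth t y)) ∧
      Tendsto (fun t => V (i.insertNth t y)) atTop (nhds 0) ∧
      Tendsto (fun t => V (i.insertNth t y)) atBot (nhds 0) := by
  have h1 : ∀ᵐ y : Fin n → ℝ, Integrable (fun t => pd i V (i.insertNth t y)) :=
    (((measurePreserving_insertNth i).integrable_comp_emb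
      (measurableEmbedding_insertNth i)).2 hint).prod_left_ae
  have h2 := (measurePreserving_insertNth i).quasiMeasurePreserving.ae hlim
  simp only [Fin.update_insertNth] at h2
  have h3 := Measure.ae_ae_of_ae_prod
    (Measure.measurePreserving_swap (μ := (volume : Measure (Fin n → ℝ)))
      (ν := (volume : Measure ℝ)) |>.quasiMeasurePreserving.ae h2)
  filter_upwards [h1, h3] with y hy1 hy3
  exact ⟨hy1, hy3.exists.choose_spec⟩

/-- Fundamental theorem of calculus along lines in direction `i`, followed by Fubini. -/
lemma integral_pd_eq_zero {n : ℕ} (i : Fin (n + 1)) {V : (Fin (n + 1) → ℝ) → ℝ}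
    (hV : ContDiff ℝ 1 V) (hint : Integrable (pd i V))
    (hlim : ∀ᵐ x : Fin (n + 1) → ℝ, Tendsto (fun t => V (Function.update x i t)) atTop (nhds 0) ∧
      Tendsto (fun t => V (Function.update x i t)) atBot (nhds 0)) :
    ∫ x, pd i V x = 0 := by
  rw [← (measurePreserving_insertNth i).integral_comp (measurableEmbedding_insertNth i),
    integral_prod_symm (fun z : ℝ × (Fin n → ℝ) => pd i V (i.insertNth z.1 z.2))
      (((measurePreserving_insertNth i).integrable_comp_emb
        (measurableEmbedding_insertNth i)).2 hint)]
  rw [integral_eq_zero_of_ae]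
  filter_upwards [ae_line i hint hlim] with y hy
  simpa using integral_of_hasDerivAt_of_tendsto (hasDerivAt_pd_insertNth i hV y) hy.1 hy.2.2 hy.2.1

/-- Along almost every line in direction `i`, `|V|` is bounded by the integral of `|∂ᵢV|` over
that line. -/
lemma ae_enorm_le {n : ℕ} (i : Fin (n + 1)) {V : (Fin (n + 1) → ℝ) → ℝ}
    (hV : ContDiff ℝ 1 V) (hint : Integrable (pd i V))
    (hlim : ∀ᵐ x : Fin (n + 1) → ℝ, Tendsto (fun t => V (Function.update x i t)) atTop (nhds 0) ∧
      Tendsto (fun t => V (Function.update x i t)) atBot (nhds 0)) :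
    ∀ᵐ y : Fin n → ℝ, ∀ t : ℝ,
      ‖V (i.insertNth t y)‖ₑ ≤ ∫⁻ s : ℝ, ‖pd i V (i.insertNth s y)‖ₑ := by
  filter_upwards [ae_line i hint hlim] with y hy t
  have := integral_Iic_of_hasDerivAt_of_tendsto (a := t)
    (hasDerivAt_pd_insertNth i hV y t).continuousAt.continuousWithinAt
    (fun s _ => hasDerivAt_pd_insertNth i hV y s) hy.1.integrableOn hy.2.2
  rw [sub_zero] at this
  rw [← this]
  exact (enorm_integral_le_lintegral_enorm _).trans (setLIntegral_le_lintegral _ _)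

/-- On the slab `|xᵢ| ≤ 2R`, the integral of `|V|` against a weight `w` that does not depend on
`xᵢ` costs only a factor `4R` (the length of the slab) over that of `|∂ᵢV|`. -/
lemma lintegral_slab_le {n : ℕ} (i : Fin (n + 1)) {V : (Fin (n + 1) → ℝ) → ℝ}
    (hV : ContDiff ℝ 1 V) (hint : Integrable (pd i V))
    (hlim : ∀ᵐ x : Fin (n + 1) → ℝ, Tendsto (fun t => V (Function.update x i t)) atTop (nhds 0) ∧
      Tendsto (fun t => V (Function.update x i t)) atBot (nhds 0))
    {w : (Fin (n + 1) → ℝ) → ENNReal} (hw : Measurable w)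
    (hwi : ∀ x t, w (Function.update x i t) = w x) (R : ℝ) :
    ∫⁻ x, {x | |x i| ≤ 2 * R}.indicator 1 x * (w x * ‖V x‖ₑ)
      ≤ ENNReal.ofReal (4 * R) * ∫⁻ x, w x * ‖pd i V x‖ₑ := by
  have hS : MeasurableSet {x : Fin (n + 1) → ℝ | |x i| ≤ 2 * R} :=
    measurableSet_le (by fun_prop) measurable_const
  have hm1 : Measurable fun x => w x * ‖pd i V x‖ₑ :=
    hw.mul (continuous_pd hV).measurable.enorm
  have hm0 : Measurable fun x => {x | |x i| ≤ 2 * R}.indicator 1 x * (w x * ‖V x‖ₑ) :=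
    (measurable_one.indicator hS).mul (hw.mul hV.continuous.measurable.enorm)
  have hwc : ∀ (y : Fin n → ℝ) (t : ℝ), w (i.insertNth t y) = w (i.insertNth 0 y) := by
    intro y t
    rw [← hwi (i.insertNth 0 y) t, Fin.update_insertNth]
  rw [lintegral_insertNth i hm0, lintegral_insertNth i hm1]
  have hm2 : Measurable fun y : Fin n → ℝ =>
      ∫⁻ t : ℝ, w (i.insertNth t y) * ‖pd i V (i.insertNth t y)‖ₑ :=
    (hm1.comp (measurableEmbedding_insertNth i).measurable).lintegral_prod_left'
  rw [← lintegral_const_mul _ hm2]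
  refine lintegral_mono_ae ?_
  filter_upwards [ae_enorm_le i hV hint hlim] with y hy
  have hmy : Measurable fun s : ℝ => ‖pd i V (i.insertNth s y)‖ₑ :=
    ((continuous_pd hV).measurable.comp ((measurableEmbedding_insertNth i).measurable.comp
      measurable_prodMk_right)).enorm
  simp_rw [hwc y]
  rw [lintegral_const_mul _ hmy]
  calc ∫⁻ t : ℝ, {x : Fin (n + 1) → ℝ | |x i| ≤ 2 * R}.indicator 1 (i.insertNth t y)
        * (w (i.insertNth 0 y) * ‖V (i.insertNth t y)‖ₑ)
      ≤ ∫⁻ t : ℝ, (Set.Icc (-(2 * R)) (2 * R)).indicator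
          (fun _ => w (i.insertNth 0 y) * ∫⁻ s : ℝ, ‖pd i V (i.insertNth s y)‖ₑ) t := by
        refine lintegral_mono fun t => ?_
        by_cases ht : |t| ≤ 2 * R
        · have ht' : t ∈ Set.Icc (-(2 * R)) (2 * R) := abs_le.1 ht
          simp only [Set.indicator, Set.mem_ofPred_eq, Fin.insertNth_apply_same, ht, if_true, ht',
            Pi.one_apply, one_mul]
          gcongr
          exact hy t
        · simp [Set.indicator, ht]
    _ = _ := by
        rw [lintegral_indicator measurableSet_Icc, setLIntegral_const, Real.volume_Icc, mul_comm]
        congr 2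
        ring

/-! ### The cutoff argument -/

/-- Smooth cutoffs `χ m = ∏ₗ θ(xₗ / (m + 1))`, with `θ` a bump function equal to `1` on `[-1, 1]`
and supported in `[-2, 2]`. The derivative `∂ᵢχ m` is `O(1/m)` and lives where `|xᵢ| ≥ m + 1` and
all coordinates are at most `2 (m + 1)` in absolute value. -/
lemma exists_cutoff (d : ℕ) : ∃ C : ℝ, 0 ≤ C ∧ ∃ χ : ℕ → (Fin d → ℝ) → ℝ, ∀ m : ℕ,
    ContDiff ℝ 1 (χ m) ∧ HasCompactSupport (χ m) ∧ (∀ x, |χ m x| ≤ 1) ∧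
    (∀ x, (∀ l, |x l| ≤ (m : ℝ) + 1) → χ m x = 1) ∧
    ∀ i j x, ‖pd i (χ m) x‖ₑ ≤ ENNReal.ofReal (C / (m + 1)) *
      ({x : Fin d → ℝ | |x j| ≤ 2 * ((m : ℝ) + 1)}.indicator 1 x *
        {x : Fin d → ℝ | (m : ℝ) + 1 ≤ |x i|}.indicator 1 x) := by
  let θ : ContDiffBump (0 : ℝ) := ⟨1, 2, one_pos, one_lt_two⟩
  have hθ : ContDiff ℝ 1 θ := θ.contDiff (n := 1)
  have hθ1 : ∀ s, |s| ≤ 1 → θ s = 1 := fun s hs =>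
    θ.one_of_mem_closedBall (by simpa [θ] using hs)
  have hθ0 : ∀ s, 2 ≤ |s| → θ s = 0 := fun s hs => θ.zero_of_le_dist (by simpa [θ] using hs)
  have hθabs : ∀ s, |θ s| ≤ 1 := fun s => abs_le.2 ⟨by linarith [θ.nonneg (x := s)], θ.le_one⟩
  obtain ⟨C, hC⟩ := (hθ.continuous_deriv le_rfl).bounded_above_of_compact_support
    θ.hasCompactSupport.deriv
  have hC0 : 0 ≤ C := (norm_nonneg _).trans (hC 0)
  have hd0 : ∀ s, |s| < 1 → deriv θ s = 0 := by
    intro s hs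
    have : θ =ᶠ[nhds s] fun _ => (1 : ℝ) := by
      filter_upwards [(isOpen_lt continuous_abs continuous_const).mem_nhds hs] with r hr
      exact hθ1 r (le_of_lt hr)
    rw [this.deriv_eq, deriv_const]
  refine ⟨C, hC0, fun m x => ∏ l, θ (x l / (m + 1)), fun m => ?_⟩
  have hm : (0 : ℝ) < m + 1 := by positivity
  have hsmooth : ContDiff ℝ 1 fun x : Fin d → ℝ => ∏ l, θ (x l / ((m : ℝ) + 1)) :=
    contDiff_prod fun l _ => hθ.comp (by fun_prop)
  have hfar : ∀ (x : Fin d → ℝ) l, 2 * ((m : ℝ) + 1) ≤ |x l| → θ (x l / (m + 1)) = 0 := by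
    intro x l hl
    apply hθ0
    rwa [abs_div, abs_of_pos hm, le_div_iff₀ hm]
  refine ⟨hsmooth, ?_, ?_, ?_, ?_⟩
  · refine HasCompactSupport.intro (isCompact_closedBall (0 : Fin d → ℝ) (2 * (m + 1))) ?_
    intro x hx
    rw [mem_closedBall_zero_iff, pi_norm_le_iff_of_nonneg (by positivity)] at hx
    push Not at hx
    obtain ⟨l, hl⟩ := hx
    exact Finset.prod_eq_zero (Finset.mem_univ l) (hfar x l hl.le)
  · intro x
    rw [Finset.abs_prod]
    exact Finset.prod_le_one (fun _ _ => abs_nonneg _) fun _ _ => hθabs _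
  · intro x hx
    refine Finset.prod_eq_one fun l _ => hθ1 _ ?_
    rw [abs_div, abs_of_pos hm, div_le_one hm]
    exact hx l
  · intro i j x
    have hpd : pd i (fun x : Fin d → ℝ => ∏ l, θ (x l / ((m : ℝ) + 1))) x
        = deriv θ (x i / (m + 1)) / (m + 1)
          * ∏ l ∈ Finset.univ.erase i, θ (x l / (m + 1)) := by
      have h1 := hasDerivAt_pd_update i hsmooth x (x i)
      rw [Function.update_eq_self] at h1
      refine h1.unique ?_
      have h2 : HasDerivAt (fun s : ℝ => θ (s / (m + 1)))
          (deriv θ (x i / (m + 1)) / (m + 1)) (x i) := by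
        have := (hθ.differentiable one_ne_zero (x i / (m + 1))).hasDerivAt.comp (x i)
          ((hasDerivAt_id (x i)).div_const ((m : ℝ) + 1))
        rwa [mul_one_div] at this
      refine (h2.mul_const (∏ l ∈ Finset.univ.erase i, θ (x l / (m + 1)))).congr_of_eventuallyEq
        (Eventually.of_forall fun s => ?_)
      change ∏ l, θ (Function.update x i s l / ((m : ℝ) + 1)) = _
      rw [← Finset.mul_prod_erase _ _ (Finset.mem_univ i), Function.update_self]
      congr 1
      refine Finset.prod_congr rfl fun l hl => ?_
      rw [Function.update_of_ne (Finset.ne_of_mem_erase hl)]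
    by_cases hi : (m : ℝ) + 1 ≤ |x i|
    · by_cases hj : |x j| ≤ 2 * ((m : ℝ) + 1)
      · simp only [Set.indicator, Set.mem_ofPred_eq, hi, hj, if_true, Pi.one_apply, mul_one]
        rw [Real.enorm_eq_ofReal_abs]
        refine ENNReal.ofReal_le_ofReal ?_
        rw [hpd, abs_mul, abs_div, abs_of_pos hm, Finset.abs_prod]
        calc _ ≤ C / (m + 1) * 1 := by
              gcongr
              · exact hC _
              · exact Finset.prod_le_one (fun _ _ => abs_nonneg _) fun _ _ => hθabs _
          _ = _ := mul_one _
      -- outside the box both `θ` and its derivative vanish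
      · have hz : pd i (fun x : Fin d → ℝ => ∏ l, θ (x l / ((m : ℝ) + 1))) x = 0 := by
          rw [hpd]
          push Not at hj
          by_cases hij : j = i
          · subst hij
            have : deriv θ (x j / (m + 1)) = 0 := by
              have h2 : 2 < |x j / ((m : ℝ) + 1)| := by
                rwa [abs_div, abs_of_pos hm, lt_div_iff₀ hm]
              have : θ =ᶠ[nhds (x j / ((m : ℝ) + 1))] fun _ => (0 : ℝ) := by
                filter_upwards [(isOpen_lt continuous_const continuous_abs).mem_nhds h2] with r hr
                exact hθ0 r (le_of_lt hr)
              rw [this.deriv_eq, deriv_const]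
            simp [this]
          · rw [Finset.prod_eq_zero (Finset.mem_erase.2 ⟨hij, Finset.mem_univ j⟩)
              (hfar x j hj.le), mul_zero]
        rw [hz]
        simp
    · have hz : pd i (fun x : Fin d → ℝ => ∏ l, θ (x l / ((m : ℝ) + 1))) x = 0 := by
        rw [hpd, hd0, zero_div, zero_mul]
        rw [abs_div, abs_of_pos hm, div_lt_one hm]
        exact not_le.1 hi
      rw [hz]
      simp

/-- The error term of the cutoff argument: since `∂ᵢχ m` is `O(1/m)` on a slab of width `O(m)` in
direction `j`, the slab estimate bounds `∫ V ∂ᵢχ m` by the tail of `∫ |∂ⱼV|` over `|xᵢ| ≥ m`. -/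
lemma tendsto_integral_cutoff {n : ℕ} {i j : Fin (n + 1)} (hij : i ≠ j)
    {V : (Fin (n + 1) → ℝ) → ℝ} (hV : ContDiff ℝ 1 V) (hint : Integrable (pd j V))
    (hlim : ∀ᵐ x : Fin (n + 1) → ℝ, Tendsto (fun t => V (Function.update x j t)) atTop (nhds 0) ∧
      Tendsto (fun t => V (Function.update x j t)) atBot (nhds 0))
    {C : ℝ} {χ : ℕ → (Fin (n + 1) → ℝ) → ℝ}
    (hχ : ∀ (m : ℕ) x, ‖pd i (χ m) x‖ₑ ≤ ENNReal.ofReal (C / (m + 1)) *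
      ({x : Fin (n + 1) → ℝ | |x j| ≤ 2 * ((m : ℝ) + 1)}.indicator 1 x *
        {x : Fin (n + 1) → ℝ | (m : ℝ) + 1 ≤ |x i|}.indicator 1 x)) :
    Tendsto (fun m => ∫ x, pd i (χ m) x * V x) atTop (nhds 0) := by
  have hS : ∀ m : ℕ, MeasurableSet {x : Fin (n + 1) → ℝ | (m : ℝ) + 1 ≤ |x i|} := fun m =>
    measurableSet_le measurable_const (by fun_prop)
  have hS' : ∀ m : ℕ, MeasurableSet {x : Fin (n + 1) → ℝ | |x j| ≤ 2 * ((m : ℝ) + 1)} := fun m =>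
    measurableSet_le (by fun_prop) measurable_const
  let w : ℕ → (Fin (n + 1) → ℝ) → ENNReal := fun m =>
    {x : Fin (n + 1) → ℝ | (m : ℝ) + 1 ≤ |x i|}.indicator 1
  have hw : ∀ m, Measurable (w m) := fun m => measurable_one.indicator (hS m)
  have hwj : ∀ m x t, w m (Function.update x j t) = w m x := by
    intro m x t
    simp [w, Set.indicator, Function.update_of_ne hij]
  have htail : Tendsto (fun m => ∫⁻ x, w m x * ‖pd j V x‖ₑ) atTop (nhds 0) := by
    have := tendsto_lintegral_of_dominated_convergence (μ := (volume : Measure (Fin (n + 1) → ℝ)))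
      (F := fun m x => w m x * ‖pd j V x‖ₑ) (f := fun _ => 0) (fun x => ‖pd j V x‖ₑ)
      (fun m => (hw m).mul (continuous_pd hV).measurable.enorm)
      (fun m => Eventually.of_forall fun x => by
        by_cases h : (m : ℝ) + 1 ≤ |x i| <;> simp [w, h])
      hint.hasFiniteIntegral.ne (Eventually.of_forall fun x => by
        refine tendsto_const_nhds.congr' ?_
        obtain ⟨N, hN⟩ := exists_nat_ge |x i|
        filter_upwards [eventually_ge_atTop N] with m hm
        have hm' : (N : ℝ) ≤ m := by exact_mod_cast hm
        have : ¬ (m : ℝ) + 1 ≤ |x i| := by linarith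
        simp [w, this])
    simpa using this
  have hbound : ∀ m : ℕ, ‖∫ x, pd i (χ m) x * V x‖ₑ
      ≤ ENNReal.ofReal (4 * C) * ∫⁻ x, w m x * ‖pd j V x‖ₑ := by
    intro m
    have hm : (0 : ℝ) < m + 1 := by positivity
    have hms : Measurable fun x => {x : Fin (n + 1) → ℝ | |x j| ≤ 2 * ((m : ℝ) + 1)}.indicator 1 x *
          (w m x * ‖V x‖ₑ) :=
      (measurable_one.indicator (hS' m)).mul ((hw m).mul hV.continuous.measurable.enorm)
    calc ‖∫ x, pd i (χ m) x * V x‖ₑ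
        ≤ ∫⁻ x, ‖pd i (χ m) x * V x‖ₑ := enorm_integral_le_lintegral_enorm _
      _ ≤ ∫⁻ x, ENNReal.ofReal (C / (m + 1)) *
          ({x : Fin (n + 1) → ℝ | |x j| ≤ 2 * ((m : ℝ) + 1)}.indicator 1 x *
            (w m x * ‖V x‖ₑ)) := by
          refine lintegral_mono fun x => ?_
          rw [enorm_mul]
          refine (mul_le_mul_left (hχ m x) _).trans (le_of_eq ?_)
          simp only [w]
          ring
      _ ≤ ENNReal.ofReal (C / (m + 1)) * (ENNReal.ofReal (4 * (m + 1)) *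
            ∫⁻ x, w m x * ‖pd j V x‖ₑ) := by
          rw [lintegral_const_mul _ hms]
          gcongr
          exact lintegral_slab_le j hV hint hlim (hw m) (hwj m) _
      _ = _ := by
          rw [← mul_assoc, ← ENNReal.ofReal_mul' (by positivity)]
          congr 2
          field_simp
  rw [tendsto_iff_enorm_sub_tendsto_zero]
  simp only [sub_zero]
  refine tendsto_of_tendsto_of_tendsto_of_le_of_le tendsto_const_nhds ?_ (fun _ => zero_le) hbound
  have := ENNReal.Tendsto.const_mul (a := ENNReal.ofReal (4 * C)) htail
    (Or.inr ENNReal.ofReal_ne_top)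
  rwa [mul_zero] at this

/-- A symmetrized derivative `h = (∂ᵢVⱼ + ∂ⱼVᵢ)/2` which is integrable has integral zero as soon as
`∂ᵢVᵢ` and `∂ⱼVⱼ` are integrable and `Vᵢ`, `Vⱼ` vanish at infinity in their own directions.
The summands `∂ᵢVⱼ` and `∂ⱼVᵢ` need not be integrable separately. -/
lemma integral_symm_grad_eq_zero {n : ℕ} (V : Fin (n + 1) → (Fin (n + 1) → ℝ) → ℝ)
    (hV : ∀ i, ContDiff ℝ 1 (V i))
    (hint : ∀ i j, Integrable (fun x => (pd i (V j) x + pd j (V i) x) / 2))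
    (hlim : ∀ i, ∀ᵐ x : Fin (n + 1) → ℝ,
      Tendsto (fun t => V i (Function.update x i t)) atTop (nhds 0) ∧
      Tendsto (fun t => V i (Function.update x i t)) atBot (nhds 0)) (i j : Fin (n + 1)) :
    ∫ x, (pd i (V j) x + pd j (V i) x) / 2 = 0 := by
  have hdiag : ∀ i, Integrable (pd i (V i)) := fun i =>
    (hint i i).congr (Eventually.of_forall fun x => by simp)
  by_cases hij : i = j
  · subst hij
    simpa using integral_pd_eq_zero i (hV i) (hdiag i) (hlim i)
  obtain ⟨C, -, χ, hχ⟩ := exists_cutoff (n + 1)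
  -- integration by parts against the compactly supported cutoff
  have hparts : ∀ m (a b : Fin (n + 1)), Integrable (fun x => χ m x * pd a (V b) x) ∧
      ∫ x, χ m x * pd a (V b) x = -∫ x, pd a (χ m) x * V b x := by
    intro m a b
    have hs := (hχ m).2.1
    have hsp : HasCompactSupport (pd a (χ m)) := hs.fderiv_apply (𝕜 := ℝ) _
    have h1 : Integrable (fun x => χ m x * pd a (V b) x) :=
      ((hχ m).1.continuous.mul (continuous_pd (hV b))).integrable_of_hasCompactSupport
        hs.mul_right
    refine ⟨h1, ?_⟩
    exact integral_mul_fderiv_eq_neg_fderiv_mul_of_integrable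
      (((continuous_pd (hχ m).1).mul (hV b).continuous).integrable_of_hasCompactSupport
        hsp.mul_right) h1
      (((hχ m).1.continuous.mul (hV b).continuous).integrable_of_hasCompactSupport hs.mul_right)
      (fun x _ => (hχ m).1.differentiable one_ne_zero x)
      (fun x _ => (hV b).differentiable one_ne_zero x)
  have hzero : Tendsto (fun m => ∫ x, χ m x * ((pd i (V j) x + pd j (V i) x) / 2)) atTop
      (nhds 0) := by
    have h1 := tendsto_integral_cutoff (C := C) (χ := χ) hij (hV j) (hdiag j) (hlim j)
      (fun m x => (hχ m).2.2.2.2 i j x)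
    have h2 := tendsto_integral_cutoff (C := C) (χ := χ) (Ne.symm hij) (hV i) (hdiag i) (hlim i)
      (fun m x => (hχ m).2.2.2.2 j i x)
    have h3 := ((h1.add h2).neg).div_const 2
    simp only [add_zero, neg_zero, zero_div] at h3
    refine h3.congr fun m => ?_
    have : (fun x => χ m x * ((pd i (V j) x + pd j (V i) x) / 2))
        = fun x => (χ m x * pd i (V j) x + χ m x * pd j (V i) x) / 2 := by
      ext x
      ring
    rw [this, integral_div, integral_add (hparts m i j).1 (hparts m j i).1, (hparts m i j).2,
      (hparts m j i).2]
    ring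
  have hconv : Tendsto (fun m => ∫ x, χ m x * ((pd i (V j) x + pd j (V i) x) / 2)) atTop
      (nhds (∫ x, (pd i (V j) x + pd j (V i) x) / 2)) := by
    refine tendsto_integral_of_dominated_convergence
      (fun x => ‖(pd i (V j) x + pd j (V i) x) / 2‖)
      (fun m => (hχ m).1.continuous.aestronglyMeasurable.mul (hint i j).aestronglyMeasurable)
      (hint i j).norm (fun m => Eventually.of_forall fun x => ?_)
      (Eventually.of_forall fun x => ?_)
    · rw [norm_mul]
      exact mul_le_of_le_one_left (norm_nonneg _) ((hχ m).2.2.1 x)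
    · refine tendsto_const_nhds.congr' ?_
      obtain ⟨N, hN⟩ := exists_nat_ge ‖x‖
      filter_upwards [eventually_ge_atTop N] with m hm
      have hm' : (N : ℝ) ≤ m := by exact_mod_cast hm
      rw [(hχ m).2.2.2.1 x fun l => ?_, one_mul]
      have := norm_le_pi_norm x l
      rw [Real.norm_eq_abs] at this
      linarith
  exact tendsto_nhds_unique hconv hzero

/-! ### Double integration by parts and the chain rule -/

/-- Double integration by parts `∫ g ∂ᵢ∂ⱼp = ∫ p ∂ᵢ∂ⱼg`: the difference of the integrands is the
symmetrized derivative of `V = g ∇p - p ∇g`. -/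
lemma integral_mul_pd_pd {d : ℕ} {g p : (Fin d → ℝ) → ℝ} (hg : ContDiff ℝ 2 g)
    (hp : ContDiff ℝ 2 p)
    (h1 : ∀ i j, Integrable (fun x => g x * pd i (pd j p) x))
    (h2 : ∀ i j, Integrable (fun x => p x * pd i (pd j g) x))
    (hb1 : ∀ i, ∀ᵐ x : Fin d → ℝ,
      Tendsto (fun t => g (Function.update x i t) * pd i p (Function.update x i t))
        atTop (nhds 0) ∧
      Tendsto (fun t => g (Function.update x i t) * pd i p (Function.update x i t))
        atBot (nhds 0))
    (hb2 : ∀ i, ∀ᵐ x : Fin d → ℝ,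
      Tendsto (fun t => pd i g (Function.update x i t) * p (Function.update x i t))
        atTop (nhds 0) ∧
      Tendsto (fun t => pd i g (Function.update x i t) * p (Function.update x i t))
        atBot (nhds 0))
    (i j : Fin d) :
    ∫ x, g x * pd i (pd j p) x = ∫ x, p x * pd i (pd j g) x := by
  cases d with
  | zero => exact i.elim0
  | succ n =>
    have hg1 : ContDiff ℝ 1 g := hg.of_le (by norm_num)
    have hp1 : ContDiff ℝ 1 p := hp.of_le (by norm_num)
    let V : Fin (n + 1) → (Fin (n + 1) → ℝ) → ℝ := fun i x => g x * pd i p x - pd i g x * p x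
    have hV : ∀ i, ContDiff ℝ 1 (V i) := fun i =>
      (hg1.mul (contDiff_pd hp)).sub ((contDiff_pd hg).mul hp1)
    have hpdV : ∀ a b x, pd a (V b) x = g x * pd a (pd b p) x + pd a g x * pd b p x
        - (pd b g x * pd a p x + pd a (pd b g) x * p x) := by
      intro a b x
      rw [pd_sub a (hg1.mul (contDiff_pd hp)) ((contDiff_pd hg).mul hp1),
        pd_mul a hg1 (contDiff_pd hp), pd_mul a (contDiff_pd hg) hp1]
    have hsymm : ∀ a b x, (pd a (V b) x + pd b (V a) x) / 2
        = g x * pd a (pd b p) x - p x * pd a (pd b g) x := by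
      intro a b x
      rw [hpdV, hpdV, pd_comm b a hp, pd_comm b a hg]
      ring
    have key := integral_symm_grad_eq_zero V hV
      (fun a b => by simp_rw [hsymm]; exact (h1 a b).sub (h2 a b))
      (fun a => by
        filter_upwards [hb1 a, hb2 a] with x hx1 hx2
        exact ⟨by simpa using hx1.1.sub hx2.1, by simpa using hx1.2.sub hx2.2⟩) i j
    simp_rw [hsymm] at key
    rw [integral_sub (h1 i j) (h2 i j)] at key
    linarith

/-- Chain rule for a linear change of variables, `∂ᵢ(u ∘ Bᵀ) = ∑ₐ Bᵢₐ (∂ₐu) ∘ Bᵀ`. -/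
lemma pd_comp_matrix {d k : ℕ} (B : Matrix (Fin d) (Fin k) ℝ) {u : (Fin k → ℝ) → ℝ}
    (hu : ContDiff ℝ 1 u) (i : Fin d) (x : Fin d → ℝ) :
    pd i (fun y => u (fun a => ∑ l, B l a * y l)) x
      = ∑ a, B i a * pd a u (fun a => ∑ l, B l a * x l) := by
  have hL : HasFDerivAt (fun y : Fin d → ℝ => fun a : Fin k => ∑ l, B l a * y l)
      (Matrix.toLin' Bᵀ).toContinuousLinearMap x := by
    have := (Matrix.toLin' Bᵀ).toContinuousLinearMap.hasFDerivAt (x := x)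
    refine this.congr_of_eventuallyEq (Eventually.of_forall fun y => ?_)
    ext a
    simp [Matrix.mulVec, dotProduct]
  have h := (hu.differentiable one_ne_zero (fun a => ∑ l, B l a * x l)).hasFDerivAt.comp x hL
  unfold pd
  rw [show (fun y : Fin d → ℝ => u (fun a => ∑ l, B l a * y l))
    = u ∘ fun y : Fin d → ℝ => fun a : Fin k => ∑ l, B l a * y l from rfl, h.fderiv]
  have hcol : (Matrix.toLin' Bᵀ) (Pi.single i 1) = ∑ a, B i a • Pi.single a (1 : ℝ) := by
    ext b
    simp [Finset.sum_apply, Pi.single_apply]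
  simp only [ContinuousLinearMap.comp_apply, LinearMap.coe_toContinuousLinearMap', hcol, map_sum,
    map_smul, smul_eq_mul]

/-- **Second-order Stein identity for multiple-index models.** In the model
`Y = f(B*ᵀ X) + ε` with `X` having an everywhere positive `C²` density `p` on `ℝ^d`,
`B* ∈ ℝ^{d×k}` with orthonormal columns, `f : ℝ^k → ℝ` twice continuously differentiable
and `ε` mean-zero independent of `X`, if the second-order Stein identity applies to
`x ↦ f(B*ᵀ x)` and `Y·T_p(X)` is entrywise integrable, then
`E[Y · T_p(X)] = B* D₀ B*ᵀ` where `D₀ = E[∇²f(B*ᵀ X)]` (stated entrywise). -/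
theorem stmt_6 {d k : ℕ} {Ω : Type*} [MeasurableSpace Ω] (P : Measure Ω)
    [IsProbabilityMeasure P]
    (p : (Fin d → ℝ) → ℝ) (hp_pos : ∀ x, 0 < p x) (hp : ContDiff ℝ 2 p)
    (X : Ω → Fin d → ℝ) (hX : AEMeasurable X P)
    (hlaw : Measure.map X P =
      (volume : Measure (Fin d → ℝ)).withDensity fun x => ENNReal.ofReal (p x))
    (f : (Fin k → ℝ) → ℝ) (hf : ContDiff ℝ 2 f)
    (B : Matrix (Fin d) (Fin k) ℝ) (hB : Bᵀ * B = 1)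
    (ε : Ω → ℝ) (hεint : Integrable ε P) (hεmean : ∫ ω, ε ω ∂P = 0)
    (hindep : IndepFun X ε P)
    (Y : Ω → ℝ) (hY : ∀ ω, Y ω = f (fun a => ∑ j, B j a * X ω j) + ε ω)
    -- Stein hypotheses for `g : x ↦ f(B*ᵀ x)` : integrability of `g · T_p` and of the
    -- Hessian of `g`, and vanishing boundary terms in the double integration by parts
    (hint1 : ∀ j k', Integrable
      (fun ω => f (fun a => ∑ l, B l a * X ω l) * score2 p (X ω) j k') P)
    (hint2 : ∀ a b, Integrable (fun ω => hess f (fun a' => ∑ l, B l a' * X ω l) a b) P)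
    (hbound1 : ∀ j k' : Fin d, ∀ᵐ x ∂(volume : Measure (Fin d → ℝ)),
      Tendsto (fun t => f (fun a => ∑ l, B l a * Function.update x j t l) *
        fderiv ℝ p (Function.update x j t) (Pi.single k' 1)) atTop (nhds 0) ∧
      Tendsto (fun t => f (fun a => ∑ l, B l a * Function.update x j t l) *
        fderiv ℝ p (Function.update x j t) (Pi.single k' 1)) atBot (nhds 0))
    (hbound2 : ∀ j k' : Fin d, ∀ᵐ x ∂(volume : Measure (Fin d → ℝ)),
      Tendsto (fun t =>
        fderiv ℝ (fun y : Fin d → ℝ => f (fun a => ∑ l, B l a * y l))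
          (Function.update x k' t) (Pi.single j 1) *
        p (Function.update x k' t)) atTop (nhds 0) ∧
      Tendsto (fun t =>
        fderiv ℝ (fun y : Fin d → ℝ => f (fun a => ∑ l, B l a * y l))
          (Function.update x k' t) (Pi.single j 1) *
        p (Function.update x k' t)) atBot (nhds 0))
    (hYT : ∀ j k', Integrable (fun ω => Y ω * score2 p (X ω) j k') P) :
    ∀ j j' : Fin d, ∫ ω, Y ω * score2 p (X ω) j j' ∂P =
      ∑ a, ∑ b, B j a * (∫ ω, hess f (fun a' => ∑ l, B l a' * X ω l) a b ∂P) * B j' b := by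
  intro j j'
  set g : (Fin d → ℝ) → ℝ := fun y => f (fun a => ∑ l, B l a * y l) with hgdef
  have hg : ContDiff ℝ 2 g := hf.comp (by fun_prop)
  have hf1 : ContDiff ℝ 1 f := hf.of_le (by norm_num)
  have hpd2p : ∀ i i' : Fin d, Continuous (pd i (pd i' p)) := fun i i' =>
    continuous_pd (contDiff_pd hp)
  have hTcont : ∀ i i' : Fin d, Continuous (fun x => score2 p x i i') := fun i i' =>
    (hpd2p i i').div hp.continuous fun x => ne_of_gt (hp_pos x)
  -- expectations of functions of `X` as integrals against the density
  have hdens : Measurable fun x => ENNReal.ofReal (p x) := hp.continuous.measurable.ennreal_ofReal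
  have htop : ∀ᵐ x : Fin d → ℝ, ENNReal.ofReal (p x) < ⊤ :=
    Eventually.of_forall fun x => ENNReal.ofReal_lt_top
  have htrI : ∀ φ : (Fin d → ℝ) → ℝ, Continuous φ → Integrable (fun ω => φ (X ω)) P →
      Integrable (fun x => p x * φ x) := by
    intro φ hφ h
    have h1 := (integrable_map_measure hφ.aestronglyMeasurable hX).2 h
    rw [hlaw, integrable_withDensity_iff_integrable_smul' hdens htop] at h1
    simpa [ENNReal.toReal_ofReal (hp_pos _).le] using h1
  have htrE : ∀ φ : (Fin d → ℝ) → ℝ, Continuous φ →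
      ∫ ω, φ (X ω) ∂P = ∫ x, p x * φ x := by
    intro φ hφ
    rw [← integral_map hX hφ.aestronglyMeasurable, hlaw,
      integral_withDensity_eq_integral_toReal_smul hdens htop]
    simp [ENNReal.toReal_ofReal (hp_pos _).le]
  have hgT : ∀ i i' x, p x * (g x * score2 p x i i') = g x * pd i (pd i' p) x := by
    intro i i' x
    have := (hp_pos x).ne'
    change p x * (g x * (pd i (pd i' p) x / p x)) = _
    field_simp
  -- Hessian of `g` from the chain rule
  have hHg : ∀ i i' x, pd i (pd i' g) x
      = ∑ a, ∑ b, B i a * hess f (fun a' => ∑ l, B l a' * x l) a b * B i' b := by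
    intro i i' x
    have h1 : pd i' g = fun y => (fun z => ∑ b, B i' b * pd b f z) (fun a => ∑ l, B l a * y l) :=
      funext fun y => pd_comp_matrix B hf1 i' y
    have hsum : ContDiff ℝ 1 fun z => ∑ b, B i' b * pd b f z :=
      ContDiff.sum fun b _ => contDiff_const.mul (contDiff_pd hf)
    rw [h1, pd_comp_matrix B hsum i x]
    refine Finset.sum_congr rfl fun a _ => ?_
    have h2 : ∀ z, pd a (fun z => ∑ b, B i' b * pd b f z) z
        = ∑ b, B i' b * pd a (pd b f) z := by
      intro z
      change fderiv ℝ (fun z => ∑ b, B i' b * pd b f z) z (Pi.single a 1) = _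
      rw [fderiv_fun_sum fun b _ =>
        ((contDiff_pd (i := b) hf).differentiable one_ne_zero z).const_mul (B i' b)]
      simp only [_root_.sum_apply]
      refine Finset.sum_congr rfl fun b _ => ?_
      rw [fderiv_const_mul ((contDiff_pd (i := b) hf).differentiable one_ne_zero z)]
      rfl
    rw [h2, Finset.mul_sum]
    refine Finset.sum_congr rfl fun b _ => ?_
    change B i a * (B i' b * hess f _ a b) = _
    ring
  have hHint : ∀ i i' a b, Integrable (fun ω =>
      B i a * hess f (fun a' => ∑ l, B l a' * X ω l) a b * B i' b) P := fun i i' a b =>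
    ((hint2 a b).const_mul _).mul_const _
  have hH2cont : ∀ i i' : Fin d, Continuous (pd i (pd i' g)) := fun i i' =>
    continuous_pd (contDiff_pd hg)
  have hstein : ∫ ω, g (X ω) * score2 p (X ω) j j' ∂P = ∫ ω, pd j (pd j' g) (X ω) ∂P := by
    rw [htrE (fun x => g x * score2 p x j j') (hg.continuous.mul (hTcont j j')),
      htrE _ (hH2cont j j')]
    simp_rw [hgT]
    refine integral_mul_pd_pd hg hp (fun i i' => ?_) (fun i i' => ?_) (fun i => hbound1 i i)
      (fun i => hbound2 i i) j j'
    · simp_rw [← hgT]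
      exact htrI (fun x => g x * score2 p x i i') (hg.continuous.mul (hTcont i i')) (hint1 i i')
    · refine htrI _ (hH2cont i i') ?_
      simp_rw [hHg]
      exact integrable_finsetSum _ fun a _ => integrable_finsetSum _ fun b _ => hHint _ _ a b
  -- the noise contributes nothing: it is centred and independent of `X`
  have hnoise : ∫ ω, score2 p (X ω) j j' * ε ω ∂P = 0 := by
    have hind : IndepFun (fun ω => score2 p (X ω) j j') ε P :=
      hindep.comp (hTcont j j').measurable measurable_id
    rw [hind.integral_fun_mul_eq_mul_integral
      ((hTcont j j').measurable.comp_aemeasurable hX).aestronglyMeasurable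
      hεint.aestronglyMeasurable, hεmean, mul_zero]
  have hsplit : ∀ ω, Y ω * score2 p (X ω) j j'
      = g (X ω) * score2 p (X ω) j j' + score2 p (X ω) j j' * ε ω := by
    intro ω
    rw [hY]
    ring
  have hnint : Integrable (fun ω => score2 p (X ω) j j' * ε ω) P := by
    refine ((hYT j j').sub (hint1 j j')).congr (Eventually.of_forall fun ω => ?_)
    simp only [Pi.sub_apply, hsplit ω]
    ring
  simp_rw [hsplit]
  rw [integral_add (hint1 j j') hnint, hnoise, add_zero]
  refine hstein.trans ?_
  simp_rw [hHg]
  rw [integral_finsetSum _ fun a _ => integrable_finsetSum _ fun b _ => hHint j j' a b]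
  refine Finset.sum_congr rfl fun a _ => ?_
  rw [integral_finsetSum _ fun b _ => hHint j j' a b]
  refine Finset.sum_congr rfl fun b _ => ?_
  rw [integral_mul_const, integral_const_mul]
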